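/- Let n ≥ 5 and let G_n be the graph obtained from the anticycle on n vertices by removing the edge {n−2, n}. Then the ordering of the minimal monomial generators of I_{G_n}^2 by decreasing lexicographic order induced by x_n > x_{n−1} > … > x_1 is not a linear quotient ordering of I_{G_n}^2. -/

import Mathlib

open MvPolynomial

noncomputable section

/-- The edge ideal of a finite simple graph on vertex set `Fin n`
(vertex with index `v` corresponds to the vertex `v+1` of `[n]`). -/
def edgeIdeal (K : Type*) [Field K] {n : ℕ} (G : SimpleGraph (Fin n)) :
    Ideal (MvPolynomial (Fin n) K) :=
  Ideal.span {p | ∃ i j : Fin n, G.Adj i j ∧ p = X i * X j}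

/-- `d` is the exponent vector of a minimal monomial generator of `I`. -/
def IsMinGen {K : Type*} [Field K] {n : ℕ} (I : Ideal (MvPolynomial (Fin n) K))
    (d : Fin n →₀ ℕ) : Prop :=
  monomial d (1 : K) ∈ I ∧
    ∀ e : Fin n →₀ ℕ, e ≤ d → e ≠ d → monomial e (1 : K) ∉ I

/-- A list of exponent vectors `L = [d_1, …, d_r]` is a linear quotient ordering if
for every `i ≥ 2` the colon ideal `(x^{d_1}, …, x^{d_{i-1}}) : x^{d_i}` is generated
by a subset of the variables. -/
def IsLinQuotOrder (K : Type*) [Field K] {n : ℕ} (L : List (Fin n →₀ ℕ)) : Prop :=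
  ∀ i : Fin L.length, 0 < i.val →
    ∃ V : Set (Fin n),
      Submodule.colon
        (Ideal.span {m : MvPolynomial (Fin n) K |
          ∃ k : Fin L.length, k.val < i.val ∧ m = monomial (L.get k) 1})
        (Ideal.span {monomial (L.get i) (1 : K)}) =
      Ideal.span ((fun v : Fin n => (X v : MvPolynomial (Fin n) K)) '' V)

/-- A monomial ideal has linear quotients if it is principal or admits a
linear quotient ordering of its minimal monomial generators. -/
def HasLinearQuotients {K : Type*} [Field K] {n : ℕ}
    (I : Ideal (MvPolynomial (Fin n) K)) : Prop :=
  (∃ p, I = Ideal.span {p}) ∨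
    ∃ L : List (Fin n →₀ ℕ), L.Nodup ∧ (∀ d, d ∈ L ↔ IsMinGen I d) ∧ IsLinQuotOrder K L

/-- `lexLt d e` : the monomial `x^d` is lexicographically smaller than `x^e`
for the lexicographic order induced by `x_n > x_{n-1} > … > x_1`. -/
def lexLt {n : ℕ} (d e : Fin n →₀ ℕ) : Prop :=
  ∃ k : Fin n, d k < e k ∧ ∀ m : Fin n, k < m → d m = e m

/-- `L` lists the minimal monomial generators of `I` in decreasing lexicographic order. -/
def LexDecMinGenOrder {K : Type*} [Field K] {n : ℕ} (I : Ideal (MvPolynomial (Fin n) K))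
    (L : List (Fin n →₀ ℕ)) : Prop :=
  List.Pairwise (fun d e => lexLt e d) L ∧ ∀ d, d ∈ L ↔ IsMinGen I d

/-- The anticycle on `[m]` : `{i,j}` is an edge iff `i ≠ j` and `i - j ≢ ±1 (mod m)`. -/
def anticycle (m : ℕ) : SimpleGraph (Fin m) where
  Adj i j := i ≠ j ∧ (i.val + 1) % m ≠ j.val ∧ (j.val + 1) % m ≠ i.val
  symm := ⟨fun i j h => ⟨h.1.symm, h.2.2, h.2.1⟩⟩
  loopless := ⟨fun i h => h.1 rfl⟩

/-- The anticycle on `[m]` regarded as a graph on the vertex set `[n]`. -/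
def anticycleIn (n m : ℕ) : SimpleGraph (Fin n) where
  Adj i j := i ≠ j ∧ i.val < m ∧ j.val < m ∧ (i.val + 1) % m ≠ j.val ∧ (j.val + 1) % m ≠ i.val
  symm := ⟨fun i j h => ⟨h.1.symm, h.2.2.1, h.2.1, h.2.2.2.2, h.2.2.2.1⟩⟩
  loopless := ⟨fun i h => h.1 rfl⟩

/-- The star on `[n]` with edges `{i, n}` for `1 ≤ i ≤ n - 3`
(in the `0`-indexed picture: edges `{i, n-1}` for `i ≤ n - 4`). -/
def starF (n : ℕ) : SimpleGraph (Fin n) :=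
  SimpleGraph.fromRel (fun i j => i.val + 4 ≤ n ∧ j.val = n - 1)

/-- `AgreeOrder n s i j t` : the degree-`s` monomials with ascending (0-indexed)
index sequences `i` and `j` agree in order `t`. -/
def AgreeOrder (n s : ℕ) (i j : ℕ → Fin n) (t : ℕ) : Prop :=
  if t = 0 then j (s - 1) < i (s - 1)
  else (∀ l, s - t ≤ l → l ≤ s - 1 → i l = j l) ∧ i (s - t - 1) ≠ j (s - t - 1)

/-- `d` is the exponent vector of a product of two edges of `G`. -/
def IsEP {n : ℕ} (G : SimpleGraph (Fin n)) (d : Fin n →₀ ℕ) : Prop :=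
  ∃ a b c e : Fin n, G.Adj a b ∧ G.Adj c e ∧
    d = Finsupp.single a 1 + Finsupp.single b 1 + (Finsupp.single c 1 + Finsupp.single e 1)

lemma edgeIdeal_sq (K : Type*) [Field K] {n : ℕ} (G : SimpleGraph (Fin n)) :
    edgeIdeal K G ^ 2 = Ideal.span ((fun s => monomial s (1 : K)) '' {d | IsEP G d}) := by
  rw [pow_two, edgeIdeal, Ideal.span_mul_span']
  congr 1
  ext p
  simp only [Set.mem_mul, Set.mem_setOf_eq, Set.mem_image]
  constructor
  · rintro ⟨_, ⟨a, b, hab, rfl⟩, _, ⟨c, e, hce, rfl⟩, rfl⟩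
    refine ⟨_, ⟨a, b, c, e, hab, hce, rfl⟩, ?_⟩
    simp [X, monomial_mul]
  · rintro ⟨_, ⟨a, b, c, e, hab, hce, rfl⟩, rfl⟩
    refine ⟨_, ⟨a, b, hab, rfl⟩, _, ⟨c, e, hce, rfl⟩, ?_⟩
    simp [X, monomial_mul]

lemma mono_mem_span (K : Type*) [Field K] {n : ℕ} (S : Set (Fin n →₀ ℕ)) (d : Fin n →₀ ℕ) :
    monomial d (1 : K) ∈ Ideal.span ((fun s => monomial s (1 : K)) '' S) ↔ ∃ e ∈ S, e ≤ d := by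
  classical
  rw [mem_ideal_span_monomial_image]
  simp [support_monomial]

lemma IsEP.degree {n : ℕ} {G : SimpleGraph (Fin n)} {d : Fin n →₀ ℕ} (h : IsEP G d) :
    d.degree = 4 := by
  obtain ⟨a, b, c, e, -, -, rfl⟩ := h
  simp [Finsupp.degree_single]

lemma IsEP.eq_of_le {n : ℕ} {G : SimpleGraph (Fin n)} {d e : Fin n →₀ ℕ} (h : IsEP G d)
    (h2 : IsEP G e) (hle : e ≤ d) : e = d := by
  obtain ⟨f, rfl⟩ := exists_add_of_le hle
  have h3 := h.degree
  rw [map_add, h2.degree] at h3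
  have : f = 0 := by
    rw [← Finsupp.degree_eq_zero_iff]; omega
  simp [this]

lemma isMinGen_iff (K : Type*) [Field K] {n : ℕ} (G : SimpleGraph (Fin n)) (d : Fin n →₀ ℕ) :
    IsMinGen (edgeIdeal K G ^ 2) d ↔ IsEP G d := by
  rw [IsMinGen, edgeIdeal_sq]
  simp only [mono_mem_span, Set.mem_setOf_eq]
  constructor
  · rintro ⟨⟨e, he, hle⟩, h⟩
    by_contra hd
    exact h e hle (fun h' => hd (h' ▸ he)) ⟨e, he, le_rfl⟩
  · intro h
    refine ⟨⟨d, h, le_rfl⟩, ?_⟩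
    rintro e hle hne ⟨f, hf, hfe⟩
    have := h.eq_of_le hf (hfe.trans hle)
    subst this
    exact hne (le_antisymm hle hfe)

lemma lexLt_trans {n : ℕ} {a b c : Fin n →₀ ℕ} (h : lexLt a b) (h2 : lexLt b c) : lexLt a c := by
  obtain ⟨k, hk, hk'⟩ := h
  obtain ⟨l, hl, hl'⟩ := h2
  rcases lt_trichotomy k l with hkl | rfl | hkl
  · exact ⟨l, by rw [hk' l hkl]; exact hl, fun m hm => (hk' m (hkl.trans hm)).trans (hl' m hm)⟩
  · exact ⟨k, hk.trans hl, fun m hm => (hk' m hm).trans (hl' m hm)⟩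
  · exact ⟨k, by rw [← hl' k hkl]; exact hk, fun m hm => (hk' m hm).trans (hl' m (hkl.trans hm))⟩

lemma lexLt_irrefl {n : ℕ} {a : Fin n →₀ ℕ} : ¬ lexLt a a := by
  rintro ⟨k, hk, -⟩; exact lt_irrefl _ hk

lemma lexLt_total {n : ℕ} (a b : Fin n →₀ ℕ) (hab : a ≠ b) : lexLt a b ∨ lexLt b a := by
  classical
  have hne : (Finset.univ.filter (fun i => a i ≠ b i)).Nonempty := by
    obtain ⟨i, hi⟩ := Finsupp.ne_iff.1 hab
    exact ⟨i, by simpa using hi⟩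
  obtain ⟨k, hk, hmax⟩ := Finset.exists_max_image _ id hne
  have hk2 : a k ≠ b k := by simpa using hk
  have hm : ∀ m, k < m → a m = b m := by
    intro m hkm
    by_contra hc
    exact absurd (hmax m (by simpa using hc)) (not_le.2 hkm)
  rcases lt_or_gt_of_ne hk2 with h | h
  · exact Or.inl ⟨k, h, hm⟩
  · exact Or.inr ⟨k, h, fun m h => (hm m h).symm⟩

lemma exists_lexList {n : ℕ} (S : Finset (Fin n →₀ ℕ)) :
    ∃ L : List (Fin n →₀ ℕ), List.Pairwise (fun d e => lexLt e d) L ∧ ∀ d, d ∈ L ↔ d ∈ S := by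
  classical
  let r : (Fin n →₀ ℕ) → (Fin n →₀ ℕ) → Prop := fun d e => lexLt e d ∨ d = e
  haveI : Std.Total r := ⟨fun a b => by
    by_cases h : a = b
    · exact Or.inl (Or.inr h)
    · rcases lexLt_total a b h with h | h
      · exact Or.inr (Or.inl h)
      · exact Or.inl (Or.inl h)⟩
  haveI : IsTrans _ r := ⟨fun a b c h h2 => by
    rcases h with h | rfl
    · rcases h2 with h2 | rfl
      · exact Or.inl (lexLt_trans h2 h)
      · exact Or.inl h
    · exact h2⟩
  refine ⟨S.toList.insertionSort r, ?_, ?_⟩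
  · have h1 := List.pairwise_insertionSort r S.toList
    have h2 : (S.toList.insertionSort r).Nodup :=
      (List.perm_insertionSort r S.toList).nodup_iff.2 S.nodup_toList
    refine (h1.and h2).imp ?_
    rintro a b ⟨h | h, h'⟩
    · exact h
    · exact absurd h h'
  · intro d
    rw [(List.perm_insertionSort r S.toList).mem_iff, Finset.mem_toList]

lemma isEP_finite {n : ℕ} (G : SimpleGraph (Fin n)) : {d | IsEP G d}.Finite := by
  refine (Set.finite_range (fun t : Fin n × Fin n × Fin n × Fin n =>
    Finsupp.single t.1 1 + Finsupp.single t.2.1 1 +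
      (Finsupp.single t.2.2.1 1 + Finsupp.single t.2.2.2 (1 : ℕ)))).subset ?_
  rintro d ⟨a, b, c, e, -, -, rfl⟩
  exact ⟨(a, b, c, e), rfl⟩

/-- Criterion for failure of linear quotients. -/
lemma not_linQuot (K : Type*) [Field K] {n : ℕ} (L : List (Fin n →₀ ℕ))
    (hL : List.Pairwise (fun d e => lexLt e d) L) (M N : Fin n →₀ ℕ) (hM : M ∈ L) (hN : N ∈ L)
    (hMN : lexLt M N) (p q : Fin n)
    (hle : N ≤ Finsupp.single p 1 + Finsupp.single q 1 + M)
    (hno : ∀ v, v = p ∨ v = q → ∀ d ∈ L, lexLt M d → ¬ d ≤ Finsupp.single v 1 + M) :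
    ¬ IsLinQuotOrder K L := by
  classical
  intro h
  obtain ⟨i, rfl⟩ := List.mem_iff_get.1 hM
  obtain ⟨k, rfl⟩ := List.mem_iff_get.1 hN
  have hget := List.pairwise_iff_get.1 hL
  have hki : k < i := by
    rcases lt_trichotomy k i with h | rfl | h
    · exact h
    · exact absurd hMN lexLt_irrefl
    · exact absurd (lexLt_trans hMN (hget _ _ h)) lexLt_irrefl
  obtain ⟨V, hV⟩ := h i (lt_of_le_of_lt (Nat.zero_le _) hki)
  have hset : {m : MvPolynomial (Fin n) K |
          ∃ k : Fin L.length, k.val < i.val ∧ m = monomial (L.get k) 1} =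
      (fun s => monomial s (1 : K)) '' {d | ∃ k : Fin L.length, k.val < i.val ∧ d = L.get k} := by
    ext m
    constructor
    · rintro ⟨k, hk, rfl⟩; exact ⟨_, ⟨k, hk, rfl⟩, rfl⟩
    · rintro ⟨_, ⟨k, hk, rfl⟩, rfl⟩; exact ⟨k, hk, rfl⟩
  rw [hset] at hV
  have key : ∀ u : Fin n →₀ ℕ, monomial u (1 : K) ∈
      Ideal.span ((fun v : Fin n => (X v : MvPolynomial (Fin n) K)) '' V) ↔
      ∃ k : Fin L.length, k.val < i.val ∧ L.get k ≤ u + L.get i := by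
    intro u
    rw [← hV, Ideal.mem_colon_span_singleton, monomial_mul, one_mul, mono_mem_span]
    constructor
    · rintro ⟨_, ⟨k, hk, rfl⟩, h⟩; exact ⟨k, hk, h⟩
    · rintro ⟨k, hk, h⟩; exact ⟨_, ⟨k, hk, rfl⟩, h⟩
  have h1 := (key _).2 ⟨k, hki, hle⟩
  rw [mem_ideal_span_X_image] at h1
  obtain ⟨v, hv, hv0⟩ := h1 (Finsupp.single p 1 + Finsupp.single q 1) (by simp [support_monomial])
  have hvpq : v = p ∨ v = q := by
    by_contra hc
    push Not at hc
    apply hv0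
    simp [Finsupp.single_apply, hc.1.symm, hc.2.symm]
  have h2 : monomial (Finsupp.single v 1) (1 : K) ∈
      Ideal.span ((fun v : Fin n => (X v : MvPolynomial (Fin n) K)) '' V) :=
    Ideal.subset_span ⟨v, hv, rfl⟩
  obtain ⟨l, hl, hle2⟩ := (key _).1 h2
  exact hno v hvpq _ (List.get_mem _ _) (hget _ _ hl) hle2

set_option maxHeartbeats 2000000 in
lemma edge_cases {n : ℕ} (hn : 5 ≤ n) (r p : Fin n) (hr : r.val = n - 3) (hp : p.val = n - 1) (a b : Fin n)
    (h : ((anticycle n).deleteEdges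
          {s(r, p)}).Adj a b)
    (ha : a.val = 0 ∨ a.val = n - 4 ∨ a.val = n - 3 ∨ a.val = n - 1)
    (hb : b.val = 0 ∨ b.val = n - 4 ∨ b.val = n - 3 ∨ b.val = n - 1) :
    (a.val = 0 ∧ b.val = n - 4) ∨ (b.val = 0 ∧ a.val = n - 4) ∨
    (a.val = 0 ∧ b.val = n - 3) ∨ (b.val = 0 ∧ a.val = n - 3) ∨
    (a.val = n - 4 ∧ b.val = n - 1) ∨ (b.val = n - 4 ∧ a.val = n - 1) := by
  rw [SimpleGraph.deleteEdges_adj] at h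
  obtain ⟨⟨h0, h1, h2⟩, h3⟩ := h
  simp only [Set.mem_singleton_iff, Sym2.eq_iff, Fin.ext_iff, not_or, not_and, hr, hp] at h3
  have h0' : a.val ≠ b.val := fun h => h0 (Fin.ext h)
  have e1 : n - 1 + 1 = n := by omega
  have m0 : (0 + 1) % n = 1 := Nat.mod_eq_of_lt (by omega)
  have m4 : (n - 4 + 1) % n = n - 3 := by rw [Nat.mod_eq_of_lt (by omega)]; omega
  have m3 : (n - 3 + 1) % n = n - 2 := by rw [Nat.mod_eq_of_lt (by omega)]; omega
  have m1 : (n - 1 + 1) % n = 0 := by rw [e1, Nat.mod_self]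
  rcases ha with ha | ha | ha | ha <;> rcases hb with hb | hb | hb | hb <;>
    rw [ha] at h1 <;> rw [hb] at h2 <;>
    simp only [m0, m4, m3, m1] at h1 h2 <;> omega

lemma adj_of {n : ℕ} (hn : 5 ≤ n) (r p : Fin n) (hr : r.val = n - 3) (hp : p.val = n - 1) (a b : Fin n)
    (h : (a.val = 0 ∧ b.val = n - 3) ∨ (a.val = n - 4 ∧ b.val = n - 1)) :
    ((anticycle n).deleteEdges {s(r, p)}).Adj a b := by
  rw [SimpleGraph.deleteEdges_adj]
  have e1 : n - 1 + 1 = n := by omega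
  simp only [anticycle, Set.mem_singleton_iff, Sym2.eq_iff, Fin.ext_iff, ne_eq, hr, hp]
  rcases h with ⟨ha, hb⟩ | ⟨ha, hb⟩
  · rw [ha, hb, Nat.mod_eq_of_lt (by omega), Nat.mod_eq_of_lt (by omega)]; omega
  · rw [ha, hb, Nat.mod_eq_of_lt (by omega), e1, Nat.mod_self]; omega

lemma no_pred {n : ℕ} (hn : 5 ≤ n) (z q r p v : Fin n) (hz : z.val = 0) (hq : q.val = n - 4)
    (hr : r.val = n - 3) (hp : p.val = n - 1) (hv : v = p ∨ v = q) (d : Fin n →₀ ℕ)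
    (hd : IsEP ((anticycle n).deleteEdges
          {s(r, p)}) d)
    (hlt : lexLt (Finsupp.single z 1 + Finsupp.single r 1 +
      (Finsupp.single q 1 + Finsupp.single p 1)) d)
    (hle : d ≤ Finsupp.single v 1 + (Finsupp.single z 1 + Finsupp.single r 1 +
      (Finsupp.single q 1 + Finsupp.single p 1))) : False := by
  classical
  obtain ⟨a, b, c, e, hab, hce, rfl⟩ := hd
  have hzr : z ≠ r := fun h => by rw [h] at hz; omega
  have hzq : z ≠ q := fun h => by rw [h] at hz; omega
  have hzp : z ≠ p := fun h => by rw [h] at hz; omega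
  have hqr : q ≠ r := fun h => by rw [h] at hq; omega
  have hqp : q ≠ p := fun h => by rw [h] at hq; omega
  have hrp : r ≠ p := fun h => by rw [h] at hr; omega
  have mem : ∀ x : Fin n, 1 ≤ (Finsupp.single a 1 + Finsupp.single b 1 +
      (Finsupp.single c 1 + Finsupp.single e 1) : Fin n →₀ ℕ) x →
      x.val = 0 ∨ x.val = n - 4 ∨ x.val = n - 3 ∨ x.val = n - 1 := by
    intro x hx
    by_contra hc
    have h1 := hx.trans (hle x)
    have n1 : z ≠ x := fun h => by subst h; omega
    have n2 : q ≠ x := fun h => by subst h; omega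
    have n3 : r ≠ x := fun h => by subst h; omega
    have n4 : p ≠ x := fun h => by subst h; omega
    have n5 : v ≠ x := by rcases hv with rfl | rfl <;> assumption
    simp [Finsupp.single_apply, n1, n2, n3, n4, n5] at h1
  have ma := mem a (by simp; omega)
  have mb := mem b (by simp; omega)
  have mc := mem c (by simp; omega)
  have me := mem e (by simp; omega)
  have conv : ∀ a b : Fin n, ((anticycle n).deleteEdges
          {s(r, p)}).Adj a b →
    (a.val = 0 ∨ a.val = n - 4 ∨ a.val = n - 3 ∨ a.val = n - 1) →
    (b.val = 0 ∨ b.val = n - 4 ∨ b.val = n - 3 ∨ b.val = n - 1) →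
    ∃ f : Fin n →₀ ℕ, Finsupp.single a 1 + Finsupp.single b 1 = f ∧
      (f = Finsupp.single z 1 + Finsupp.single q 1 ∨ f = Finsupp.single z 1 + Finsupp.single r 1 ∨
        f = Finsupp.single q 1 + Finsupp.single p 1) := by
    intro a b h ha hb
    refine ⟨_, rfl, ?_⟩
    rcases edge_cases hn r p hr hp a b h ha hb with ⟨h1, h2⟩ | ⟨h1, h2⟩ | ⟨h1, h2⟩ | ⟨h1, h2⟩ | ⟨h1, h2⟩ |
      ⟨h1, h2⟩
    · left; rw [Fin.ext (h1.trans hz.symm), Fin.ext (h2.trans hq.symm)]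
    · left; rw [Fin.ext (h1.trans hz.symm), Fin.ext (h2.trans hq.symm), add_comm]
    · right; left; rw [Fin.ext (h1.trans hz.symm), Fin.ext (h2.trans hr.symm)]
    · right; left; rw [Fin.ext (h1.trans hz.symm), Fin.ext (h2.trans hr.symm), add_comm]
    · right; right; rw [Fin.ext (h1.trans hq.symm), Fin.ext (h2.trans hp.symm)]
    · right; right; rw [Fin.ext (h1.trans hq.symm), Fin.ext (h2.trans hp.symm), add_comm]
  obtain ⟨f, hf, hf'⟩ := conv a b hab ma mb
  obtain ⟨g, hg, hg'⟩ := conv c e hce mc me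
  rw [hf, hg] at hle hlt
  clear mem conv hf hg ma mb mc me hab hce
  -- the two lexicographic facts
  have noAC : ¬ lexLt (Finsupp.single z 1 + Finsupp.single r 1 +
      (Finsupp.single q 1 + Finsupp.single p 1)) (Finsupp.single z 1 + Finsupp.single q 1 +
      (Finsupp.single q 1 + Finsupp.single p 1)) := by
    rintro ⟨k, hk, hk'⟩
    by_cases hkq : k = q
    · subst hkq
      have := hk' r (Fin.lt_def.2 (by omega))
      simp [Finsupp.single_apply, hzr, hqr, hrp.symm] at this
    · simp [Finsupp.single_apply, Ne.symm hkq] at hk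
  have hle0 := hle z
  have hlep := hle p
  have hleq := hle q
  have vz : v ≠ z := by rcases hv with rfl | rfl <;> exact Ne.symm (by assumption)
  rcases hf' with rfl | rfl | rfl <;> rcases hg' with rfl | rfl | rfl
  case inr.inr.inr.inr =>
    rcases hv with rfl | rfl <;>
    simp [Finsupp.single_apply, hzq, hzp, hqr.symm, hqp, hrp, hqp.symm] at hlep hleq
  case inl.inr.inr => exact noAC hlt
  case inr.inr.inl => exact noAC (by rwa [add_comm (Finsupp.single q 1 + Finsupp.single p 1) (Finsupp.single z 1 + Finsupp.single q 1)] at hlt)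
  case inr.inl.inr.inr => exact lexLt_irrefl hlt
  case inr.inr.inr.inl =>
    rw [add_comm (Finsupp.single q 1 + Finsupp.single p 1) (Finsupp.single z 1 + Finsupp.single r 1)] at hlt
    exact lexLt_irrefl hlt
  all_goals
    simp [Finsupp.single_apply, hzq.symm, hzp.symm, hzr.symm, vz] at hle0

/-- For `n ≥ 5` and `G_n` the anticycle on `[n]` with the edge `{n-2, n}` removed
(0-indexed: `{n-3, n-1}`), the decreasing lexicographic ordering (induced by
`x_n > … > x_1`) of the minimal generators of `I_{G_n}^2` is not a linear quotient
ordering. -/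
theorem lex_not_linear_quotient_order
    (K : Type*) [Field K] (n : ℕ) (hn : 5 ≤ n) :
    ∃ L : List (Fin n →₀ ℕ),
      LexDecMinGenOrder
        ((edgeIdeal K ((anticycle n).deleteEdges
          {s(⟨n - 3, by omega⟩, ⟨n - 1, by omega⟩)})) ^ 2) L ∧
      ¬ IsLinQuotOrder K L := by
  classical
  set G := ((anticycle n).deleteEdges
          {s(⟨n - 3, by omega⟩, ⟨n - 1, by omega⟩)}) with hG
  obtain ⟨L, hL, hmem⟩ := exists_lexList (isEP_finite G).toFinset
  have hmem' : ∀ d, d ∈ L ↔ IsEP G d := fun d => by rw [hmem]; simp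
  refine ⟨L, ⟨hL, fun d => by rw [hmem', isMinGen_iff]⟩, ?_⟩
  let z : Fin n := ⟨0, by omega⟩
  let q : Fin n := ⟨n - 4, by omega⟩
  let r : Fin n := ⟨n - 3, by omega⟩
  let p : Fin n := ⟨n - 1, by omega⟩
  have hzr : G.Adj z r := adj_of hn _ _ rfl rfl _ _ (Or.inl ⟨rfl, rfl⟩)
  have hqp : G.Adj q p := adj_of hn _ _ rfl rfl _ _ (Or.inr ⟨rfl, rfl⟩)
  have nzp : z ≠ p := fun h => by have := congrArg Fin.val h; simp [z, p] at this; omega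
  have nqp : q ≠ p := hqp.ne
  have nrp : r ≠ p := fun h => by have := congrArg Fin.val h; simp [r, p] at this; omega
  refine not_linQuot K L hL
    (Finsupp.single z 1 + Finsupp.single r 1 + (Finsupp.single q 1 + Finsupp.single p 1))
    (Finsupp.single q 1 + Finsupp.single p 1 + (Finsupp.single q 1 + Finsupp.single p 1))
    ((hmem' _).2 ⟨_, _, _, _, hzr, hqp, rfl⟩) ((hmem' _).2 ⟨_, _, _, _, hqp, hqp, rfl⟩)
    ?_ q p ?_ ?_
  · refine ⟨p, ?_, ?_⟩
    · simp [Finsupp.single_apply, nzp, nqp, nrp]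
    · intro m hm
      have h1 := Fin.lt_def.1 hm
      have h2 := m.2
      simp only [p] at h1
      omega
  · intro x
    simp only [Finsupp.add_apply]
    omega
  · intro v hv d hd hlt hle
    exact no_pred hn z q r p v rfl rfl rfl rfl hv.symm d ((hmem' d).1 hd) hlt hle
end
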